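/- Let 0 ≤ β < 4 and α₀ > 0. Let a, b : ℝ⁴ → ℝ be continuous functions satisfying (A₁): a(x) ≥ a₀ > 0 and b(x) ≥ b₀ > 0 for all x. Let h : ℝ⁴ → ℝ be measurable with finite dual norm ‖h‖_{E*} := sup{ |∫_{ℝ⁴} h φ dx| : φ smooth with ‖φ‖_E = 1 } < ∞. Let f : ℝ⁴ × ℝ → ℝ be continuous and satisfy: (H₁) there exist b₁, b₂ > 0 and γ ≥ 1 with |f(x,s)| ≤ b₁|s| + b₂|s|^γ (e^{α₀ s²} − 1) for all (x,s); and (H₄) limsup_{s→0} 2|F(x,s)|/s² < λ_β uniformly in x ∈ ℝ⁴, where F(x,s) = ∫₀^s f(x,t) dt and λ_β = inf{‖u‖_E² / ∫_{ℝ⁴} u²/|x|^β dx : u smooth with 0 < ‖u‖_E < ∞, u ≢ 0}. Define J_ε(u) = (1/2)‖u‖_E² − ∫_{ℝ⁴} F(x,u)/|x|^β dx − ε∫_{ℝ⁴} h u dx. Then: (i) there exists ε₁ > 0 such that for every 0 < ε < ε₁ there exist r_ε > 0 and θ_ε > 0 with J_ε(u) ≥ θ_ε for every smooth u with ‖u‖_E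 = r_ε, and r_ε can be chosen so that r_ε → 0 as ε → 0; (ii) for ε = 0, there exists r₀ > 0 such that for every 0 < r ≤ r₀ there exists θ > 0 (depending only on r) with J₀(u) ≥ θ for every smooth u with ‖u‖_E = r. -/

import Mathlib

/-!
On a small sphere `‖u‖_E = ρ` the nonlinear term costs at most `(1/2 - κ) ρ²` for a fixed `κ > 0`
(`exists_nonlinear_bound`), and by homogeneity the linear term costs at most `ε |Ch| ρ`
(`abs_integral_mul_le`), so `J_ε(u) ≥ κ ρ² - ε |Ch| ρ`. Taking `ρ = √ε` gives (i), and `ε = 0`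
gives (ii).

For `|u| ≤ δ` the nonlinearity is at most `(ℓ/2) u²` with `0 ≤ ℓ < λ_β`, and the definition of `λ_β`
bounds `∫ u² |x|^(-β)` by `ρ² / λ_β`. For `|u| > δ` the growth condition gives
`|F(x,u)| ≤ K u² exp(B u²)`, where `K` is as small as desired provided `B` is large. This part is
controlled by a singular Adams inequality with a non-optimal exponent (`exists_adams`):
`∫ u² exp(c u²/ρ²) |x|^(-β) ≤ D ρ²`. A small `c` suffices because `ρ` can be taken small.

The Adams inequality rests on three facts, with `g = |Δu| + |u|`, whose `L²` norm is at most a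
constant times `ρ`.

* `exists_potential_bound`: `|u(x)| ≤ C ∫_{|z|<1} |z|⁻² g(x+z) dz`. Green's identity is applied to
  the test function `(1-|z|²)₊⁴ / (|z|²+η)`, a cut-off and regularised fundamental solution of the
  Laplacian on `ℝ⁴`, and `η → 0`. Only smoothness of `u` is used, no decay at infinity.
* `exp_mul_le_potential`: this potential is split at a radius `τ = exp(-const · u(x)²/ρ²)`. By
  Cauchy-Schwarz the part outside is at most `|u(x)|/2`, since `∫_{τ<|z|<1} |z|⁻⁴ dz` is a multiple
  of `log(1/τ)`; hence the part inside is at least `|u(x)|/2`, and it gains a factor `τ^κ` when the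
  kernel is replaced by `|z|^(-2-κ)`. So `|u(x)| exp(c u(x)²/(2ρ²))` is bounded by the potential of
  `g` with the slightly more singular kernel.
* `exists_weighted_L2_bound`: that potential is bounded from `L²` to `L²(|x|^(-β) dx)`, by Schur's
  test, as soon as `β + 3κ < 4`.
-/

open MeasureTheory Real Filter Topology ENNReal

noncomputable section

/-- Four-dimensional Euclidean space with Lebesgue measure. -/
abbrev R4 : Type := EuclideanSpace ℝ (Fin 4)

/-- The Laplacian of `u : ℝ⁴ → ℝ`, as the sum of the pure second derivatives
along the coordinate directions. -/
noncomputable def lapl (u : R4 → ℝ) (x : R4) : ℝ :=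
  ∑ i : Fin 4, iteratedFDeriv ℝ 2 u x ![EuclideanSpace.single i 1, EuclideanSpace.single i 1]

/-- The squared `E`-norm `∫ (|Δu|² + a|∇u|² + b u²) dx`, as an extended nonnegative real. -/
noncomputable def enorm2 (a b : R4 → ℝ) (u : R4 → ℝ) : ℝ≥0∞ :=
  ∫⁻ x : R4, ENNReal.ofReal ((lapl u x) ^ 2 + a x * ‖gradient u x‖ ^ 2 + b x * (u x) ^ 2)

/-- The primitive `F(x, s) = ∫₀ˢ f(x, t) dt` of a nonlinearity `f`. -/
noncomputable def Fprim (f : R4 → ℝ → ℝ) (x : R4) (s : ℝ) : ℝ := ∫ t in (0:ℝ)..s, f x t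

/-- The functional
`J_ε(u) = (1/2)∫(|Δu|² + a|∇u|² + b u²) dx − ∫ F(x,u)/|x|^β dx − ε ∫ h u dx`. -/
noncomputable def Jfun (a b : R4 → ℝ) (β : ℝ) (f : R4 → ℝ → ℝ) (ε : ℝ) (h : R4 → ℝ)
    (u : R4 → ℝ) : ℝ :=
  (1 / 2) * (∫ x : R4, ((lapl u x) ^ 2 + a x * ‖gradient u x‖ ^ 2 + b x * (u x) ^ 2))
    - (∫ x : R4, Fprim f x (u x) / ‖x‖ ^ β)
    - ε * ∫ x : R4, h x * u x

/-- The singular eigenvalue `λ_β`, the infimum of `‖u‖_E² / ∫ u²/|x|^β dx` over nontrivial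
smooth functions of finite `E`-norm. -/
noncomputable def lambdaBeta (a b : R4 → ℝ) (β : ℝ) : ℝ :=
  sInf { r : ℝ | ∃ u : R4 → ℝ, ContDiff ℝ (⊤ : ℕ∞) u ∧ 0 < enorm2 a b u ∧
    enorm2 a b u < ⊤ ∧
    r = (enorm2 a b u).toReal / (∫⁻ x : R4, ENNReal.ofReal ((u x) ^ 2 / ‖x‖ ^ β)).toReal }

/-! ### A regularised fundamental solution -/

lemma hasDerivAt_posPart_pow (k : ℕ) (s : ℝ) :
    HasDerivAt (fun t : ℝ => max t 0 ^ (k + 2)) ((k + 2 : ℝ) * max s 0 ^ (k + 1)) s := by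
  rcases lt_trichotomy s 0 with hs | hs | hs
  · have h0 : max s 0 = 0 := max_eq_right hs.le
    rw [h0]
    have : (fun t : ℝ => max t 0 ^ (k + 2)) =ᶠ[𝓝 s] fun _ => (0 : ℝ) := by
      filter_upwards [Iio_mem_nhds hs] with t ht
      rw [max_eq_right (le_of_lt ht)]; simp
    simpa using (hasDerivAt_const s (0 : ℝ)).congr_of_eventuallyEq this
  · subst hs
    rw [hasDerivAt_iff_isLittleO_nhds_zero]
    simp only [zero_add, max_self, ne_eq, Nat.add_eq_zero_iff, OfNat.ofNat_ne_zero, and_false,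
      not_false_eq_true, zero_pow, sub_zero, one_ne_zero, mul_zero, smul_eq_mul]
    have h1 : (fun t : ℝ => max t 0 ^ (k + 2)) =O[𝓝 0] fun t : ℝ => t ^ (k + 2) := by
      refine Asymptotics.IsBigO.of_bound 1 (Eventually.of_forall fun t => ?_)
      rw [norm_pow, norm_pow, Real.norm_eq_abs, Real.norm_eq_abs, one_mul,
        abs_of_nonneg (le_max_right t 0)]
      exact pow_le_pow_left₀ (le_max_right t 0) (max_le (le_abs_self t) (abs_nonneg t)) _
    refine h1.trans_isLittleO ?_
    simpa using Asymptotics.isLittleO_pow_pow (𝕜 := ℝ) (m := 1) (n := k + 2) (by omega)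
  · have h0 : max s 0 = s := max_eq_left hs.le
    rw [h0]
    have : (fun t : ℝ => max t 0 ^ (k + 2)) =ᶠ[𝓝 s] fun t => t ^ (k + 2) := by
      filter_upwards [Ioi_mem_nhds hs] with t ht
      rw [max_eq_left (le_of_lt ht)]
    have h2 := (hasDerivAt_pow (k + 2) s).congr_of_eventuallyEq this
    simpa using h2

/-- Radial profile, in the variable `ρ = |z|²`, of the truncated and regularised fundamental
solution `(1 - |z|²)₊⁴ / (|z|² + η)` of the Laplacian on `ℝ⁴`. -/
def prof0 (η ρ : ℝ) : ℝ := max (1 - ρ) 0 ^ 4 * (ρ + η)⁻¹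

/-- First derivative of `prof0 η`. -/
def prof1 (η ρ : ℝ) : ℝ :=
  -4 * max (1 - ρ) 0 ^ 3 * (ρ + η)⁻¹ - max (1 - ρ) 0 ^ 4 * (ρ + η)⁻¹ ^ 2

/-- Second derivative of `prof0 η`. -/
def prof2 (η ρ : ℝ) : ℝ :=
  12 * max (1 - ρ) 0 ^ 2 * (ρ + η)⁻¹ + 8 * max (1 - ρ) 0 ^ 3 * (ρ + η)⁻¹ ^ 2
    + 2 * max (1 - ρ) 0 ^ 4 * (ρ + η)⁻¹ ^ 3

lemma hasDerivAt_cut (k : ℕ) (ρ : ℝ) :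
    HasDerivAt (fun t : ℝ => max (1 - t) 0 ^ (k + 2))
      (-((k + 2 : ℝ) * max (1 - ρ) 0 ^ (k + 1))) ρ := by
  have h1 : HasDerivAt (fun t : ℝ => 1 - t) (-1) ρ := by
    simpa using (hasDerivAt_id ρ).const_sub 1
  have := (hasDerivAt_posPart_pow k (1 - ρ)).comp ρ h1
  simpa [Function.comp_def] using this

lemma hasDerivAt_shiftInv {η ρ : ℝ} (hη : 0 < η) (hρ : 0 ≤ ρ) :
    HasDerivAt (fun t : ℝ => (t + η)⁻¹) (-(ρ + η)⁻¹ ^ 2) ρ := by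
  have h1 : HasDerivAt (fun t : ℝ => t + η) 1 ρ := (hasDerivAt_id ρ).add_const η
  have := h1.fun_inv (by positivity)
  refine this.congr_deriv ?_
  rw [inv_pow, neg_div, one_div]

lemma hasDerivAt_prof0 {η ρ : ℝ} (hη : 0 < η) (hρ : 0 ≤ ρ) :
    HasDerivAt (prof0 η) (prof1 η ρ) ρ := by
  have h := (hasDerivAt_cut 2 ρ).mul (hasDerivAt_shiftInv hη hρ)
  refine h.congr_deriv ?_
  simp only [prof1]; push_cast; ring

lemma hasDerivAt_prof1 {η ρ : ℝ} (hη : 0 < η) (hρ : 0 ≤ ρ) :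
    HasDerivAt (prof1 η) (prof2 η ρ) ρ := by
  have hw := hasDerivAt_shiftInv hη hρ
  have h := (((hasDerivAt_cut 1 ρ).const_mul (-4)).mul hw).sub
    ((hasDerivAt_cut 2 ρ).mul (hw.pow 2))
  refine (h.congr_deriv ?_).congr_of_eventuallyEq (Eventually.of_forall fun t => ?_)
  · simp only [prof2, Pi.pow_apply]; push_cast; ring
  · simp only [prof1, Pi.pow_apply, Pi.sub_apply, Pi.mul_apply]

lemma hasDerivAt_normSq_line (z : R4) (i : Fin 4) :
    HasDerivAt (fun t : ℝ => ‖z + t • EuclideanSpace.single i (1 : ℝ)‖ ^ 2) (2 * z i) 0 := by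
  have h : (fun t : ℝ => ‖z + t • EuclideanSpace.single i (1 : ℝ)‖ ^ 2)
      = fun t : ℝ => ‖z‖ ^ 2 + 2 * t * z i + t ^ 2 := by
    funext t
    rw [norm_add_sq_real, inner_smul_right, norm_smul]
    simp [EuclideanSpace.inner_single_right]
    ring
  rw [h]
  have h1 := (((hasDerivAt_id (0 : ℝ)).const_mul 2).mul_const (z i)).const_add (‖z‖ ^ 2)
  have h2 := h1.fun_add (hasDerivAt_pow 2 (0 : ℝ))
  simpa using h2

lemma hasLineDerivAt_radial {φ : ℝ → ℝ} {φ' : ℝ} (z : R4) (i : Fin 4)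
    (hφ : HasDerivAt φ φ' (‖z‖ ^ 2)) :
    HasLineDerivAt ℝ (fun y : R4 => φ (‖y‖ ^ 2)) (2 * z i * φ') z
      (EuclideanSpace.single i (1 : ℝ)) := by
  have h := hasDerivAt_normSq_line z i
  have h0 : HasDerivAt φ φ' (‖z + (0 : ℝ) • EuclideanSpace.single i (1 : ℝ)‖ ^ 2) := by
    simpa using hφ
  have := h0.comp (0 : ℝ) h
  unfold HasLineDerivAt
  exact this.congr_deriv (by ring)

lemma hasLineDerivAt_coord_mul_radial {φ : ℝ → ℝ} {φ' : ℝ} (z : R4) (i : Fin 4)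
    (hφ : HasDerivAt φ φ' (‖z‖ ^ 2)) :
    HasLineDerivAt ℝ (fun y : R4 => 2 * y i * φ (‖y‖ ^ 2))
      (2 * φ (‖z‖ ^ 2) + 4 * z i ^ 2 * φ') z (EuclideanSpace.single i (1 : ℝ)) := by
  have h1 : HasLineDerivAt ℝ (fun y : R4 => 2 * y i) 2 z (EuclideanSpace.single i (1 : ℝ)) := by
    unfold HasLineDerivAt
    have : (fun t : ℝ => 2 * (z + t • EuclideanSpace.single i (1 : ℝ)) i)
        = fun t : ℝ => 2 * z i + 2 * t := by
      funext t; simp; ring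
    rw [this]
    simpa using ((hasDerivAt_id (0 : ℝ)).const_mul 2).const_add (2 * z i)
  have h2 := hasLineDerivAt_radial z i hφ
  have h3 := HasDerivAt.mul h1 h2
  unfold HasLineDerivAt
  refine h3.congr_deriv ?_
  simp; ring

lemma continuous_shiftInv {η : ℝ} (hη : 0 < η) : Continuous fun z : R4 => (‖z‖ ^ 2 + η)⁻¹ :=
  Continuous.inv₀ (by fun_prop) (fun z => by positivity)

lemma continuous_prof (η : ℝ) (hη : 0 < η) :
    Continuous (fun z : R4 => prof0 η (‖z‖ ^ 2)) ∧ Continuous (fun z : R4 => prof1 η (‖z‖ ^ 2)) ∧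
      Continuous (fun z : R4 => prof2 η (‖z‖ ^ 2)) := by
  have := continuous_shiftInv hη
  refine ⟨?_, ?_, ?_⟩ <;> simp only [prof0, prof1, prof2] <;> fun_prop

lemma integrable_of_cut {F : R4 → ℝ} (hF : Continuous F) (h0 : ∀ z, 1 ≤ ‖z‖ → F z = 0) :
    Integrable F := by
  refine hF.integrable_of_hasCompactSupport ?_
  refine HasCompactSupport.intro (isCompact_closedBall (0 : R4) 1) fun z hz => h0 z ?_
  simp at hz; exact hz.le

lemma cut_eq_zero {z : R4} (hz : 1 ≤ ‖z‖) : max (1 - ‖z‖ ^ 2) 0 = 0 :=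
  max_eq_right (by nlinarith)

/-- Integration by parts, applied twice in one coordinate direction. -/
lemma integral_prof0_mul_secondDeriv {η : ℝ} (hη : 0 < η) {v : R4 → ℝ}
    (hv : ContDiff ℝ (⊤ : ℕ∞) v) (i : Fin 4) :
    ∫ z : R4, prof0 η (‖z‖ ^ 2) * iteratedFDeriv ℝ 2 v z
        ![EuclideanSpace.single i 1, EuclideanSpace.single i 1]
      = ∫ z : R4, (2 * prof1 η (‖z‖ ^ 2) + 4 * z i ^ 2 * prof2 η (‖z‖ ^ 2)) * v z := by
  obtain ⟨c0, c1, c2⟩ := continuous_prof η hη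
  set e : R4 := EuclideanSpace.single i 1 with he
  have hd1 : ContDiff ℝ (⊤ : ℕ∞) (fun z => fderiv ℝ v z e) :=
    (hv.fderiv_right (m := (⊤ : ℕ∞)) (by simp)).clm_apply contDiff_const
  have hd2 : ∀ z, iteratedFDeriv ℝ 2 v z ![e, e] = fderiv ℝ (fun z => fderiv ℝ v z e) z e := by
    intro z
    rw [iteratedFDeriv_two_apply]
    have hdd : DifferentiableAt ℝ (fderiv ℝ v) z :=
      ((hv.fderiv_right (m := (⊤ : ℕ∞)) (by simp)).differentiable (by simp)) z
    rw [fderiv_clm_apply hdd (by fun_prop)]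
    simp
  have hcd2 : Continuous fun z => iteratedFDeriv ℝ 2 v z ![e, e] := by
    simp_rw [hd2]
    exact (hd1.continuous_fderiv (by simp)).clm_apply continuous_const
  have cv := hv.continuous
  have cd1 := hd1.continuous
  have ccoord : Continuous fun z : R4 => z i := by fun_prop
  have L1 : ∀ z, HasLineDerivAt ℝ v (fderiv ℝ v z e) z e := fun z =>
    ((hv.differentiable (by simp)) z).hasFDerivAt.hasLineDerivAt e
  have L2 : ∀ z, HasLineDerivAt ℝ (fun z => fderiv ℝ v z e) (iteratedFDeriv ℝ 2 v z ![e, e]) z e :=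
    fun z => by
      rw [hd2]; exact ((hd1.differentiable (by simp)) z).hasFDerivAt.hasLineDerivAt e
  have G1 : ∀ z : R4, HasLineDerivAt ℝ (fun z : R4 => prof0 η (‖z‖ ^ 2))
      (2 * z i * prof1 η (‖z‖ ^ 2)) z e := fun z =>
    hasLineDerivAt_radial z i (hasDerivAt_prof0 hη (by positivity))
  have G2 : ∀ z : R4, HasLineDerivAt ℝ (fun z : R4 => 2 * z i * prof1 η (‖z‖ ^ 2))
      (2 * prof1 η (‖z‖ ^ 2) + 4 * z i ^ 2 * prof2 η (‖z‖ ^ 2)) z e := fun z =>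
    hasLineDerivAt_coord_mul_radial z i (hasDerivAt_prof1 hη (by positivity))
  have z0 : ∀ z : R4, 1 ≤ ‖z‖ → prof0 η (‖z‖ ^ 2) = 0 := fun z hz => by
    simp [prof0, cut_eq_zero hz]
  have z1 : ∀ z : R4, 1 ≤ ‖z‖ → prof1 η (‖z‖ ^ 2) = 0 := fun z hz => by
    simp [prof1, cut_eq_zero hz]
  have z2 : ∀ z : R4, 1 ≤ ‖z‖ → prof2 η (‖z‖ ^ 2) = 0 := fun z hz => by
    simp [prof2, cut_eq_zero hz]
  have s1 := integral_bilinear_hasLineDerivAt_right_eq_neg_left_of_integrable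
    (μ := (volume : Measure R4)) (B := ContinuousLinearMap.mul ℝ ℝ)
    (f := fun z : R4 => prof0 η (‖z‖ ^ 2)) (g := fun z => fderiv ℝ v z e)
    (f' := fun z : R4 => 2 * z i * prof1 η (‖z‖ ^ 2)) (g' := fun z => iteratedFDeriv ℝ 2 v z ![e, e])
    (v := e)
    (integrable_of_cut (by simp only [ContinuousLinearMap.mul_apply']; fun_prop)
      (fun z hz => by simp [z1 z hz]))
    (integrable_of_cut (by simp only [ContinuousLinearMap.mul_apply']; fun_prop)
      (fun z hz => by simp [z0 z hz]))
    (integrable_of_cut (by simp only [ContinuousLinearMap.mul_apply']; fun_prop)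
      (fun z hz => by simp [z0 z hz]))
    (fun z _ => G1 z) (fun z _ => L2 z)
  have s2 := integral_bilinear_hasLineDerivAt_right_eq_neg_left_of_integrable
    (μ := (volume : Measure R4)) (B := ContinuousLinearMap.mul ℝ ℝ)
    (f := fun z : R4 => 2 * z i * prof1 η (‖z‖ ^ 2)) (g := v)
    (f' := fun z : R4 => 2 * prof1 η (‖z‖ ^ 2) + 4 * z i ^ 2 * prof2 η (‖z‖ ^ 2))
    (g' := fun z => fderiv ℝ v z e)
    (v := e)
    (integrable_of_cut (by simp only [ContinuousLinearMap.mul_apply']; fun_prop)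
      (fun z hz => by simp [z1 z hz, z2 z hz]))
    (integrable_of_cut (by simp only [ContinuousLinearMap.mul_apply']; fun_prop)
      (fun z hz => by simp [z1 z hz]))
    (integrable_of_cut (by simp only [ContinuousLinearMap.mul_apply']; fun_prop)
      (fun z hz => by simp [z1 z hz]))
    (fun z _ => G2 z) (fun z _ => L1 z)
  simp only [ContinuousLinearMap.mul_apply'] at s1 s2
  rw [s1, s2, neg_neg]

lemma continuous_secondDeriv {v : R4 → ℝ} (hv : ContDiff ℝ (⊤ : ℕ∞) v) (e : Fin 2 → R4) :
    Continuous fun z => iteratedFDeriv ℝ 2 v z e := by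
  have h := hv.continuous_iteratedFDeriv (m := 2) (by
    exact WithTop.coe_le_coe.mpr (le_top : (2 : ℕ∞) ≤ ⊤))
  exact (ContinuousMultilinearMap.apply ℝ (fun _ : Fin 2 => R4) ℝ e).continuous.comp h

lemma continuous_lapl {v : R4 → ℝ} (hv : ContDiff ℝ (⊤ : ℕ∞) v) : Continuous (lapl v) := by
  unfold lapl
  exact continuous_finsetSum _ fun i _ => continuous_secondDeriv hv _

lemma lapl_comp_add (v : R4 → ℝ) (x z : R4) : lapl (fun y => v (x + y)) z = lapl v (x + z) := by
  simp only [lapl, iteratedFDeriv_comp_add_left]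

/-- Green's identity for the radial test function `prof0 η (|z|²)`, whose Laplacian is
`8 prof1 + 4 |z|² prof2`. -/
lemma integral_prof0_mul_lapl {η : ℝ} (hη : 0 < η) {v : R4 → ℝ} (hv : ContDiff ℝ (⊤ : ℕ∞) v) :
    ∫ z : R4, prof0 η (‖z‖ ^ 2) * lapl v z
      = ∫ z : R4, (8 * prof1 η (‖z‖ ^ 2) + 4 * ‖z‖ ^ 2 * prof2 η (‖z‖ ^ 2)) * v z := by
  obtain ⟨c0, c1, c2⟩ := continuous_prof η hη
  have cv := hv.continuous
  have hL : ∀ z : R4, prof0 η (‖z‖ ^ 2) * lapl v z = ∑ i : Fin 4,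
      prof0 η (‖z‖ ^ 2) * iteratedFDeriv ℝ 2 v z
        ![EuclideanSpace.single i 1, EuclideanSpace.single i 1] := fun z => by
    rw [lapl, Finset.mul_sum]
  have hR : ∀ z : R4, (8 * prof1 η (‖z‖ ^ 2) + 4 * ‖z‖ ^ 2 * prof2 η (‖z‖ ^ 2)) * v z
      = ∑ i : Fin 4, (2 * prof1 η (‖z‖ ^ 2) + 4 * z i ^ 2 * prof2 η (‖z‖ ^ 2)) * v z := fun z => by
    rw [EuclideanSpace.real_norm_sq_eq]
    simp only [Fin.sum_univ_four]
    ring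
  simp_rw [hL, hR]
  rw [integral_finsetSum, integral_finsetSum]
  · exact Finset.sum_congr rfl fun i _ => integral_prof0_mul_secondDeriv hη hv i
  · intro i _
    refine integrable_of_cut (by fun_prop) fun z hz => ?_
    simp [prof1, prof2, cut_eq_zero hz]
  · intro i _
    have := continuous_secondDeriv hv ![EuclideanSpace.single i 1, EuclideanSpace.single i 1]
    refine integrable_of_cut (by fun_prop) fun z hz => ?_
    simp [prof0, cut_eq_zero hz]

/-- The concentrating part of `-(1/8) Δ (prof0 η (|z|²))`: an approximate identity as `η → 0`. -/
def conc (η : ℝ) (z : R4) : ℝ := η * (‖z‖ ^ 2 + η)⁻¹ ^ 3 * max (1 - ‖z‖ ^ 2) 0 ^ 4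

lemma lapl_prof_eq {η : ℝ} (hη : 0 < η) (z : R4) :
    8 * prof1 η (‖z‖ ^ 2) + 4 * ‖z‖ ^ 2 * prof2 η (‖z‖ ^ 2)
      = -8 * conc η z + (48 * (‖z‖ ^ 2 * (‖z‖ ^ 2 + η)⁻¹) * max (1 - ‖z‖ ^ 2) 0 ^ 2
          - 32 * (η * (‖z‖ ^ 2 + η)⁻¹) * (‖z‖ ^ 2 + η)⁻¹ * max (1 - ‖z‖ ^ 2) 0 ^ 3) := by
  simp only [prof1, prof2, conc]
  have h : (‖z‖ ^ 2 + η) ≠ 0 := by positivity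
  field_simp
  ring

lemma continuous_conc {η : ℝ} (hη : 0 < η) : Continuous (conc η) := by
  have := continuous_shiftInv hη
  unfold conc; fun_prop

/-- Away from the concentrating part, all kernels are dominated by `80 |z|⁻²` on the unit ball. -/
lemma enorm_conc_integral_le {η : ℝ} (hη : 0 < η) {v : R4 → ℝ} (hv : ContDiff ℝ (⊤ : ℕ∞) v) :
    ‖∫ z : R4, conc η z * v z‖ₑ ≤ ENNReal.ofReal 10 *
      ∫⁻ z in Metric.ball (0 : R4) 1, ENNReal.ofReal (‖z‖ ^ (-2 : ℝ)) *
        ENNReal.ofReal (|lapl v z| + |v z|) := by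
  obtain ⟨c0, c1, c2⟩ := continuous_prof η hη
  have cv := hv.continuous
  have cl := continuous_lapl hv
  have cc := continuous_conc hη
  have cw := continuous_shiftInv hη
  set R : R4 → ℝ := fun z => 48 * (‖z‖ ^ 2 * (‖z‖ ^ 2 + η)⁻¹) * max (1 - ‖z‖ ^ 2) 0 ^ 2
          - 32 * (η * (‖z‖ ^ 2 + η)⁻¹) * (‖z‖ ^ 2 + η)⁻¹ * max (1 - ‖z‖ ^ 2) 0 ^ 3 with hR
  have cR : Continuous R := by rw [hR]; fun_prop
  have key : ∫ z : R4, conc η z * v z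
      = ∫ z : R4, (1 / 8) * (R z * v z - prof0 η (‖z‖ ^ 2) * lapl v z) := by
    have h1 := integral_prof0_mul_lapl hη hv
    have h2 : ∫ z : R4, (8 * prof1 η (‖z‖ ^ 2) + 4 * ‖z‖ ^ 2 * prof2 η (‖z‖ ^ 2)) * v z
        = -8 * (∫ z : R4, conc η z * v z) + ∫ z : R4, R z * v z := by
      rw [← integral_const_mul, ← integral_add]
      · refine integral_congr_ae (Eventually.of_forall fun z => ?_)
        simp only [lapl_prof_eq hη z, hR]; ring
      · exact integrable_of_cut (by fun_prop) fun z hz => by simp [conc, cut_eq_zero hz]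
      · exact integrable_of_cut (by fun_prop) fun z hz => by simp [hR, cut_eq_zero hz]
    rw [integral_const_mul, integral_sub, h1, h2]
    · ring
    · exact integrable_of_cut (by fun_prop) fun z hz => by simp [hR, cut_eq_zero hz]
    · exact integrable_of_cut (by fun_prop) fun z hz => by simp [prof0, cut_eq_zero hz]
  rw [key, ← lintegral_const_mul' _ _ ENNReal.ofReal_ne_top,
    ← lintegral_indicator measurableSet_ball]
  refine (enorm_integral_le_lintegral_enorm _).trans (lintegral_mono_ae ?_)
  -- the origin is excluded because `0 ^ (-2) = 0`
  have hne : ∀ᵐ z : R4, z ≠ 0 := by simp [ae_iff]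
  filter_upwards [hne] with z hz
  have hzp : 0 < ‖z‖ := norm_pos_iff.mpr hz
  by_cases hz1 : 1 ≤ ‖z‖
  · have : (1 / 8 : ℝ) * (R z * v z - prof0 η (‖z‖ ^ 2) * lapl v z) = 0 := by
      simp [hR, prof0, cut_eq_zero hz1]
    rw [this]; simp
  · push Not at hz1
    rw [Set.indicator_of_mem (by simpa using hz1), ← ENNReal.ofReal_mul (by positivity),
      ← ENNReal.ofReal_mul (by norm_num), Real.enorm_eq_ofReal_abs]
    apply ENNReal.ofReal_le_ofReal
    have hrp : ‖z‖ ^ (-2 : ℝ) = (‖z‖ ^ 2)⁻¹ := by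
      rw [Real.rpow_neg hzp.le]; norm_cast
    rw [hrp]
    set ρ := ‖z‖ ^ 2 with hρ
    have hρ0 : 0 < ρ := by positivity
    have hρ1 : ρ ≤ 1 := by rw [hρ]; nlinarith
    have hinv : 1 ≤ ρ⁻¹ := (one_le_inv₀ hρ0).mpr hρ1
    set m := max (1 - ρ) 0 with hm
    have hm0 : 0 ≤ m := le_max_right _ _
    have hm1 : m ≤ 1 := max_le (by linarith) zero_le_one
    set w := (ρ + η)⁻¹ with hw
    have hw0 : 0 < w := by positivity
    have hwρ : w ≤ ρ⁻¹ := inv_anti₀ hρ0 (by linarith)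
    have e1 : ρ * w ≤ 1 := by
      rw [hw, ← div_eq_mul_inv, div_le_one (by positivity)]; linarith
    have e2 : η * w ≤ 1 := by
      rw [hw, ← div_eq_mul_inv, div_le_one (by positivity)]; linarith
    have m2 : m ^ 2 ≤ 1 := pow_le_one₀ hm0 hm1
    have m3 : m ^ 3 ≤ 1 := pow_le_one₀ hm0 hm1
    have m4 : m ^ 4 ≤ 1 := pow_le_one₀ hm0 hm1
    have t1 : (ρ * w) * m ^ 2 ≤ 1 := mul_le_one₀ e1 (by positivity) m2
    have t1' : 0 ≤ (ρ * w) * m ^ 2 := by positivity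
    have t2 : (η * w) * w * m ^ 3 ≤ ρ⁻¹ := by
      calc (η * w) * w * m ^ 3 ≤ 1 * ρ⁻¹ * 1 := by gcongr
        _ = ρ⁻¹ := by ring
    have t2' : 0 ≤ (η * w) * w * m ^ 3 := by positivity
    have hRz : R z = 48 * (ρ * w) * m ^ 2 - 32 * (η * w) * w * m ^ 3 := rfl
    have bR : |R z| ≤ 80 * ρ⁻¹ := by
      rw [hRz, abs_le]; constructor <;> nlinarith
    have b0 : |prof0 η ρ| ≤ 80 * ρ⁻¹ := by
      have : prof0 η ρ = m ^ 4 * w := rfl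
      rw [this, abs_of_nonneg (by positivity)]
      have : m ^ 4 * w ≤ 1 * ρ⁻¹ := by gcongr
      linarith
    calc |1 / 8 * (R z * v z - prof0 η ρ * lapl v z)|
        ≤ 1 / 8 * (|R z| * |v z| + |prof0 η ρ| * |lapl v z|) := by
          rw [abs_mul, abs_of_pos (by norm_num : (0 : ℝ) < 1 / 8), ← abs_mul, ← abs_mul]
          gcongr
          exact abs_sub _ _
      _ ≤ 1 / 8 * (80 * ρ⁻¹ * |v z| + 80 * ρ⁻¹ * |lapl v z|) := by gcongr
      _ = 10 * (ρ⁻¹ * (|lapl v z| + |v z|)) := by ring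

lemma integrable_bubble : Integrable fun y : R4 => ((1 + ‖y‖ ^ 2)⁻¹ ^ 3 : ℝ) := by
  have h := integrable_rpow_neg_one_add_norm_sq (E := R4) (μ := volume) (r := 6) (by simp; norm_num)
  refine h.congr (Eventually.of_forall fun y => ?_)
  have : (0 : ℝ) < 1 + ‖y‖ ^ 2 := by positivity
  have e : (-6 / 2 : ℝ) = -(3 : ℕ) := by norm_num
  simp only [e]
  rw [Real.rpow_neg this.le, Real.rpow_natCast, inv_pow]

lemma bubble_pos : 0 < ∫ y : R4, ((1 + ‖y‖ ^ 2)⁻¹ ^ 3 : ℝ) := by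
  rw [integral_pos_iff_support_of_nonneg (fun y => by positivity) integrable_bubble]
  have : Function.support (fun y : R4 => ((1 + ‖y‖ ^ 2)⁻¹ ^ 3 : ℝ)) = Set.univ := by
    ext y; simp; positivity
  rw [this]; simp

lemma integral_conc_scale {t : ℝ} (ht : 0 < t) (v : R4 → ℝ) :
    ∫ z : R4, conc (t ^ 2) z * v z
      = ∫ y : R4, (1 + ‖y‖ ^ 2)⁻¹ ^ 3 * (max (1 - ‖t • y‖ ^ 2) 0 ^ 4 * v (t • y)) := by
  have h := Measure.integral_comp_smul (volume : Measure R4)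
    (fun z => conc (t ^ 2) z * v z) t
  have h2 : ∫ z : R4, conc (t ^ 2) z * v z
      = t ^ 4 * ∫ y : R4, conc (t ^ 2) (t • y) * v (t • y) := by
    rw [h]
    have : (Module.finrank ℝ R4) = 4 := by simp
    rw [this, smul_eq_mul, abs_of_pos (by positivity)]
    field_simp
  rw [h2, ← integral_const_mul]
  refine integral_congr_ae (Eventually.of_forall fun y => ?_)
  simp only [conc, norm_smul, Real.norm_eq_abs, mul_pow, sq_abs]
  have h1 : (1 + ‖y‖ ^ 2) ≠ 0 := by positivity
  have h3 : t ^ 2 * ‖y‖ ^ 2 + t ^ 2 = t ^ 2 * (1 + ‖y‖ ^ 2) := by ring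
  rw [h3]
  field_simp

lemma tendsto_conc {v : R4 → ℝ} (hv : Continuous v) :
    Tendsto (fun n : ℕ => ∫ z : R4, conc ((1 / ((n : ℝ) + 1)) ^ 2) z * v z) atTop
      (𝓝 ((∫ y : R4, ((1 + ‖y‖ ^ 2)⁻¹ ^ 3 : ℝ)) * v 0)) := by
  have hpos : ∀ n : ℕ, (0 : ℝ) < 1 / ((n : ℝ) + 1) := fun n => by positivity
  simp_rw [fun n : ℕ => integral_conc_scale (hpos n) v]
  rw [← integral_mul_const]
  set χ : R4 → ℝ := fun z => max (1 - ‖z‖ ^ 2) 0 ^ 4 * v z with hχ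
  have cχ : Continuous χ := by rw [hχ]; fun_prop
  have hsupp : HasCompactSupport χ :=
    HasCompactSupport.intro (isCompact_closedBall (0 : R4) 1) fun z hz => by
      simp at hz; simp [hχ, cut_eq_zero hz.le]
  obtain ⟨B, hB⟩ := hsupp.exists_bound_of_continuous cχ
  have cb : Continuous fun y : R4 => ((1 + ‖y‖ ^ 2)⁻¹ ^ 3 : ℝ) :=
    (Continuous.inv₀ (by fun_prop) fun z => by positivity).pow 3
  refine tendsto_integral_of_dominated_convergence
    (fun y : R4 => ((1 + ‖y‖ ^ 2)⁻¹ ^ 3 : ℝ) * B) ?_ (integrable_bubble.mul_const B) ?_ ?_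
  · intro n
    have : Continuous fun y : R4 => χ ((1 / ((n : ℝ) + 1)) • y) := cχ.comp (by fun_prop)
    exact (cb.mul this).aestronglyMeasurable
  · intro n
    refine Eventually.of_forall fun y => ?_
    rw [norm_mul, Real.norm_of_nonneg (by positivity : (0 : ℝ) ≤ (1 + ‖y‖ ^ 2)⁻¹ ^ 3)]
    exact mul_le_mul_of_nonneg_left (hB _) (by positivity)
  · refine Eventually.of_forall fun y => Tendsto.const_mul _ ?_
    have h0 : χ 0 = v 0 := by simp [hχ]
    rw [← h0]
    refine (cχ.tendsto 0).comp ?_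
    have := (tendsto_one_div_add_atTop_nhds_zero_nat (𝕜 := ℝ)).smul_const y
    simpa using this

/-- Local potential estimate: `|u(x)| ≤ C ∫_{|z|<1} |z|⁻² (|Δu| + |u|)(x+z) dz`. -/
lemma exists_potential_bound : ∃ C : ℝ, 0 < C ∧ ∀ u : R4 → ℝ, ContDiff ℝ (⊤ : ℕ∞) u → ∀ x : R4,
    ENNReal.ofReal |u x| ≤ ENNReal.ofReal C *
      ∫⁻ z in Metric.ball (0 : R4) 1, ENNReal.ofReal (‖z‖ ^ (-2 : ℝ)) *
        ENNReal.ofReal (|lapl u (x + z)| + |u (x + z)|) := by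
  set c := ∫ y : R4, ((1 + ‖y‖ ^ 2)⁻¹ ^ 3 : ℝ) with hc
  have hc0 : 0 < c := bubble_pos
  refine ⟨c⁻¹ * 10, by positivity, fun u hu x => ?_⟩
  set v : R4 → ℝ := fun z => u (x + z) with hv
  have hvs : ContDiff ℝ (⊤ : ℕ∞) v := hu.comp (contDiff_const.add contDiff_id)
  have hlim := (tendsto_conc hvs.continuous).enorm
  have hle := le_of_tendsto hlim (Eventually.of_forall fun n : ℕ =>
    enorm_conc_integral_le (η := (1 / ((n : ℝ) + 1)) ^ 2) (by positivity) hvs)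
  rw [← hc, enorm_mul, Real.enorm_eq_ofReal_abs, Real.enorm_eq_ofReal_abs, abs_of_pos hc0] at hle
  have hv0 : v 0 = u x := by simp [hv]
  rw [hv0] at hle
  have hl : ∀ z, lapl v z = lapl u (x + z) := fun z => lapl_comp_add u x z
  simp only [hl] at hle
  rw [ENNReal.ofReal_mul (by positivity), mul_assoc]
  calc ENNReal.ofReal |u x|
      = ENNReal.ofReal c⁻¹ * (ENNReal.ofReal c * ENNReal.ofReal |u x|) := by
        rw [← mul_assoc, ← ENNReal.ofReal_mul (by positivity), inv_mul_cancel₀ hc0.ne']; simp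
    _ ≤ _ := mul_le_mul_right hle _

/-! ### Estimates for truncated Riesz kernels -/

lemma sq_lintegral_mul_le {α : Type*} [MeasurableSpace α] (μ : Measure α) {f g : α → ℝ≥0∞}
    (hf : AEMeasurable f μ) (hg : AEMeasurable g μ) :
    (∫⁻ x, f x * g x ∂μ) ^ 2 ≤ (∫⁻ x, f x ^ 2 ∂μ) * ∫⁻ x, g x ^ 2 ∂μ := by
  have h := ENNReal.lintegral_mul_le_Lp_mul_Lq μ Real.HolderConjugate.two_two hf hg
  have h2 := pow_le_pow_left' h 2
  refine h2.trans_eq ?_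
  rw [mul_pow, ← ENNReal.rpow_natCast, ← ENNReal.rpow_natCast, ← ENNReal.rpow_mul,
    ← ENNReal.rpow_mul]
  norm_num

/-- The truncated Riesz kernel `|z|^(-q)` on the unit ball. -/
def rk (q : ℝ) : R4 → ℝ≥0∞ :=
  (Metric.ball (0 : R4) 1).indicator fun z => ENNReal.ofReal (‖z‖ ^ (-q))

lemma measurable_rpow_norm (q : ℝ) : Measurable fun z : R4 => ENNReal.ofReal (‖z‖ ^ q) :=
  (measurable_norm.pow_const q).ennreal_ofReal

lemma measurable_rk (q : ℝ) : Measurable (rk q) :=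
  (measurable_rpow_norm _).indicator measurableSet_ball

lemma lintegral_rk_lt_top {q : ℝ} (hq : q < 4) : ∫⁻ z, rk q z < ⊤ := by
  unfold rk
  rw [lintegral_indicator measurableSet_ball]
  have h := integrableOn_ball_of_norm_le_rpow (E := R4) (μ := volume) (r := 1) (C := 1) (α := q)
    (f := fun z : R4 => ‖z‖ ^ (-q)) (by simp) (by simpa using hq)
    (Eventually.of_forall fun z => by
      rw [Real.norm_of_nonneg (by positivity), one_mul])
    (measurable_norm.pow_const _).aestronglyMeasurable
  have h2 := h.hasFiniteIntegral
  rw [hasFiniteIntegral_iff_norm] at h2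
  refine lt_of_le_of_lt (lintegral_mono fun z => ?_) h2
  exact ENNReal.ofReal_le_ofReal (le_abs_self _)

/-- Four times the volume of the unit ball: the surface measure of the unit sphere of `ℝ⁴`. -/
def sph : ℝ := 4 * (volume : Measure R4).real (Metric.ball 0 1)

lemma sph_pos : 0 < sph := by
  unfold sph
  have : 0 < (volume : Measure R4).real (Metric.ball 0 1) :=
    ENNReal.toReal_pos (Metric.measure_ball_pos _ _ one_pos).ne' measure_ball_lt_top.ne
  positivity

/-- `|z|⁻²` narrowly fails to be square integrable at the origin: only a logarithm is lost. -/
lemma lintegral_annulus {τ : ℝ} (h0 : 0 < τ) (h1 : τ ≤ 1) :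
    ∫⁻ z in {z : R4 | τ ≤ ‖z‖ ∧ ‖z‖ < 1}, ENNReal.ofReal (‖z‖ ^ (-2 : ℝ)) ^ 2
      = ENNReal.ofReal (sph * -Real.log τ) := by
  set φ : ℝ → ℝ := (Set.Ico τ 1).indicator fun y => (y ^ 4)⁻¹ with hφ
  have hm : MeasurableSet {z : R4 | τ ≤ ‖z‖ ∧ ‖z‖ < 1} :=
    (measurableSet_le measurable_const measurable_norm).inter
      (measurableSet_lt measurable_norm measurable_const)
  have e1 : ∀ z : R4, Set.indicator {z : R4 | τ ≤ ‖z‖ ∧ ‖z‖ < 1}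
      (fun z => ENNReal.ofReal (‖z‖ ^ (-2 : ℝ)) ^ 2) z = ENNReal.ofReal (φ ‖z‖) := by
    intro z
    by_cases hz : τ ≤ ‖z‖ ∧ ‖z‖ < 1
    · rw [Set.indicator_of_mem (by exact hz), hφ, Set.indicator_of_mem (by exact hz),
        ← ENNReal.ofReal_pow (by positivity)]
      congr 1
      rw [Real.rpow_neg (norm_nonneg z), inv_pow]
      norm_cast
      rw [← pow_mul]
    · rw [Set.indicator_of_notMem (by exact hz), hφ, Set.indicator_of_notMem (by exact hz)]
      simp
  have e2 : (fun y : ℝ => y ^ (Module.finrank ℝ R4 - 1) • φ y)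
      = (Set.Ico τ 1).indicator fun y => y⁻¹ := by
    funext y
    by_cases hy : y ∈ Set.Ico τ 1
    · have : y ≠ 0 := (lt_of_lt_of_le h0 hy.1).ne'
      simp only [hφ, Set.indicator_of_mem hy, finrank_euclideanSpace, Fintype.card_fin, smul_eq_mul]
      norm_num
      field_simp
    · simp [hφ, Set.indicator_of_notMem hy]
  have hint : IntervalIntegrable (fun y : ℝ => y⁻¹) volume τ 1 :=
    intervalIntegrable_inv_iff.mpr (Or.inr (by
      rw [Set.uIcc_of_le h1]; simp [h0]))
  have hI : Integrable ((Set.Ico τ 1).indicator fun y : ℝ => y⁻¹) := by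
    rw [integrable_indicator_iff measurableSet_Ico]
    exact (integrableOn_Ico_iff_integrableOn_Ioo).mpr
      ((intervalIntegrable_iff_integrableOn_Ioo_of_le h1).mp hint)
  have hint2 : Integrable fun z : R4 => φ ‖z‖ := by
    rw [integrable_fun_norm_addHaar (volume : Measure R4) (f := φ), e2]
    exact hI.integrableOn
  rw [← lintegral_indicator hm]
  simp_rw [e1]
  rw [← ofReal_integral_eq_lintegral_ofReal hint2, integral_fun_norm_addHaar]
  · congr 1
    rw [e2, setIntegral_indicator measurableSet_Ico,
      show Set.Ioi (0 : ℝ) ∩ Set.Ico τ 1 = Set.Ico τ 1 from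
        Set.inter_eq_right.mpr fun y hy => lt_of_lt_of_le h0 hy.1,
      integral_Ico_eq_integral_Ioc, ← intervalIntegral.integral_of_le h1, integral_inv_of_pos h0
        one_pos]
    simp [sph, Real.log_inv]
    ring
  · refine Eventually.of_forall fun z => ?_
    simp only [hφ, Pi.zero_apply]
    exact Set.indicator_nonneg (fun y hy => by positivity) _

/-- Pointwise exponential gain. Splitting the potential at the radius `τ = exp(-s²/(4C²σR²))`, with
`σ` the area of the sphere, Cauchy-Schwarz bounds the outer part by `|s|/2`; on the inner part
`|z|⁻² ≤ τ^κ |z|^(-2-κ)`. -/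
lemma exp_mul_le_potential {C R κ s : ℝ} (hC : 0 < C) (hR : 0 < R) (hκ : 0 < κ)
    {g : R4 → ℝ≥0∞} (hg : Measurable g) (hgR : ∫⁻ y, g y ^ 2 ≤ ENNReal.ofReal (R ^ 2)) (x : R4)
    (hs : ENNReal.ofReal |s| ≤ ENNReal.ofReal C *
      ∫⁻ z in Metric.ball (0 : R4) 1, ENNReal.ofReal (‖z‖ ^ (-2 : ℝ)) * g (x + z)) :
    ENNReal.ofReal (|s| * Real.exp (κ * (s ^ 2 / (4 * C ^ 2 * sph * R ^ 2))))
      ≤ ENNReal.ofReal (2 * C) * ∫⁻ z, rk (2 + κ) z * g (x + z) := by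
  have hσ := sph_pos
  set L := s ^ 2 / (4 * C ^ 2 * sph * R ^ 2) with hL
  have hL0 : 0 ≤ L := by positivity
  set τ := Real.exp (-L) with hτ
  have hτ0 : 0 < τ := Real.exp_pos _
  have hτ1 : τ ≤ 1 := Real.exp_le_one_iff.mpr (by linarith)
  have hgx : Measurable fun z => g (x + z) := hg.comp (measurable_const_add x)
  set k : R4 → ℝ≥0∞ := fun z => ENNReal.ofReal (‖z‖ ^ (-2 : ℝ)) with hk
  have hkm : Measurable k := measurable_rpow_norm _
  set S : Set R4 := {z : R4 | τ ≤ ‖z‖ ∧ ‖z‖ < 1} with hS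
  have hcover : Metric.ball (0 : R4) 1 ⊆ Metric.ball 0 τ ∪ S := by
    intro z hz
    have hz' : ‖z‖ < 1 := by simpa using hz
    rcases lt_or_ge ‖z‖ τ with h | h
    · left; simpa using h
    · right; exact ⟨h, hz'⟩
  set I1 := ∫⁻ z in Metric.ball (0 : R4) τ, k z * g (x + z) with hI1
  set I2 := ∫⁻ z in S, k z * g (x + z) with hI2
  have hsplit : ∫⁻ z in Metric.ball (0 : R4) 1, k z * g (x + z) ≤ I1 + I2 :=
    (lintegral_mono_set hcover).trans (lintegral_union_le _ _ _)
  have hI2le : I2 ≤ ENNReal.ofReal (|s| / (2 * C)) := by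
    have h := sq_lintegral_mul_le (volume.restrict S) hkm.aemeasurable hgx.aemeasurable
    have h2 : ∫⁻ z in S, g (x + z) ^ 2 ≤ ENNReal.ofReal (R ^ 2) := by
      refine (setLIntegral_le_lintegral _ _).trans ?_
      rwa [lintegral_add_left_eq_self (fun y => g y ^ 2) x]
    rw [hS, lintegral_annulus hτ0 hτ1, ← hS] at h
    have h3 : I2 ^ 2 ≤ ENNReal.ofReal (|s| / (2 * C)) ^ 2 := by
      refine h.trans ((mul_le_mul_right h2 _).trans_eq ?_)
      rw [← ENNReal.ofReal_mul' (by positivity), ← ENNReal.ofReal_pow (by positivity), hτ,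
        Real.log_exp, div_pow, sq_abs, hL]
      congr 1
      field_simp
      ring
    exact (ENNReal.pow_le_pow_left_iff two_ne_zero).mp h3
  have hI1s : ENNReal.ofReal (|s| / 2) ≤ ENNReal.ofReal C * I1 := by
    have h : ENNReal.ofReal (|s| / 2) + ENNReal.ofReal (|s| / 2)
        ≤ ENNReal.ofReal C * I1 + ENNReal.ofReal (|s| / 2) := by
      rw [← ENNReal.ofReal_add (by positivity) (by positivity), add_halves]
      calc ENNReal.ofReal |s| ≤ ENNReal.ofReal C * (I1 + I2) :=
            hs.trans (mul_le_mul_right hsplit _)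
        _ ≤ ENNReal.ofReal C * (I1 + ENNReal.ofReal (|s| / (2 * C))) := by gcongr
        _ = ENNReal.ofReal C * I1 + ENNReal.ofReal (|s| / 2) := by
            rw [mul_add, ← ENNReal.ofReal_mul hC.le]
            congr 2
            field_simp
    exact (ENNReal.add_le_add_iff_right ENNReal.ofReal_ne_top).mp h
  have hI1le : I1 ≤ ENNReal.ofReal (τ ^ κ) * ∫⁻ z, rk (2 + κ) z * g (x + z) := by
    rw [← lintegral_const_mul' _ _ ENNReal.ofReal_ne_top, hI1,
      ← lintegral_indicator measurableSet_ball]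
    refine lintegral_mono fun z => ?_
    by_cases hz : z ∈ Metric.ball (0 : R4) τ
    · have hz' : ‖z‖ < τ := by simpa using hz
      have hz1 : z ∈ Metric.ball (0 : R4) 1 := by simpa using hz'.trans_le hτ1
      rw [Set.indicator_of_mem hz, rk, Set.indicator_of_mem hz1, ← mul_assoc]
      gcongr
      rw [hk, ← ENNReal.ofReal_mul (by positivity)]
      apply ENNReal.ofReal_le_ofReal
      rcases eq_or_ne z 0 with rfl | hz0
      · simp only [norm_zero]
        rw [Real.zero_rpow (by norm_num)]; positivity
      · have hzp : 0 < ‖z‖ := norm_pos_iff.mpr hz0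
        calc ‖z‖ ^ (-2 : ℝ) = ‖z‖ ^ κ * ‖z‖ ^ (-(2 + κ)) := by
              rw [← Real.rpow_add hzp]; congr 1; ring
          _ ≤ τ ^ κ * ‖z‖ ^ (-(2 + κ)) := by gcongr
    · rw [Set.indicator_of_notMem hz]; exact zero_le
  have hτκ : τ ^ κ = Real.exp (-(κ * L)) := by
    rw [hτ, ← Real.exp_mul]; congr 1; ring
  calc ENNReal.ofReal (|s| * Real.exp (κ * L))
      = ENNReal.ofReal (2 * Real.exp (κ * L)) * ENNReal.ofReal (|s| / 2) := by
        rw [← ENNReal.ofReal_mul (by positivity)]; congr 1; ring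
    _ ≤ ENNReal.ofReal (2 * Real.exp (κ * L)) * (ENNReal.ofReal C *
          (ENNReal.ofReal (τ ^ κ) * ∫⁻ z, rk (2 + κ) z * g (x + z))) := by
        gcongr
        exact hI1s.trans (by gcongr)
    _ = ENNReal.ofReal (2 * C) * ∫⁻ z, rk (2 + κ) z * g (x + z) := by
        rw [← mul_assoc, ← mul_assoc, ← ENNReal.ofReal_mul (by positivity),
          ← ENNReal.ofReal_mul (by positivity), hτκ, Real.exp_neg]
        congr 2
        field_simp

/-- Two singularities multiply to at most the sum of the combined singularities. -/
lemma weight_mul_rk_le {β κ : ℝ} (hβ : 0 ≤ β) (hκ : 0 ≤ κ) {x z : R4} (hx : x ≠ 0) (hz : z ≠ 0) :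
    ENNReal.ofReal (‖x‖ ^ (-β)) * rk κ z ≤ rk (β + κ) x + rk (β + κ) z := by
  by_cases hz1 : z ∈ Metric.ball (0 : R4) 1
  swap
  · rw [rk, Set.indicator_of_notMem hz1, mul_zero]; exact zero_le
  have hxp := norm_pos_iff.mpr hx
  have hzp := norm_pos_iff.mpr hz
  by_cases hxz : ‖z‖ ≤ ‖x‖
  · refine le_trans ?_ le_add_self
    rw [rk, rk, Set.indicator_of_mem hz1, Set.indicator_of_mem hz1,
      ← ENNReal.ofReal_mul (by positivity), neg_add, Real.rpow_add hzp]
    apply ENNReal.ofReal_le_ofReal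
    refine mul_le_mul_of_nonneg_right ?_ (by positivity)
    exact Real.rpow_le_rpow_of_nonpos hzp hxz (by linarith)
  · push Not at hxz
    refine le_trans ?_ le_self_add
    have hx1 : x ∈ Metric.ball (0 : R4) 1 := by
      have : ‖z‖ < 1 := by simpa using hz1
      simpa using hxz.trans this
    rw [rk, rk, Set.indicator_of_mem hz1, Set.indicator_of_mem hx1,
      ← ENNReal.ofReal_mul (by positivity), neg_add, Real.rpow_add hxp]
    apply ENNReal.ofReal_le_ofReal
    refine mul_le_mul_of_nonneg_left ?_ (by positivity)
    exact Real.rpow_le_rpow_of_nonpos hxp hxz.le (by linarith)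

/-- Weighted `L²` boundedness of the truncated Riesz potential of order `2 - κ`, by Schur's test. -/
lemma exists_weighted_L2_bound {β κ : ℝ} (hβ : 0 ≤ β) (hκ : 0 < κ) (hβκ : β + 3 * κ < 4) :
    ∃ N : ℝ≥0∞, N < ⊤ ∧ ∀ g : R4 → ℝ≥0∞, Measurable g →
      ∫⁻ x : R4, ENNReal.ofReal (‖x‖ ^ (-β)) * (∫⁻ z, rk (2 + κ) z * g (x + z)) ^ 2
        ≤ N * ∫⁻ y, g y ^ 2 := by
  set A := ∫⁻ z, rk (4 - κ) z with hA
  set B := ∫⁻ z, rk (β + 3 * κ) z with hB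
  have hAt : A < ⊤ := lintegral_rk_lt_top (by linarith)
  have hBt : B < ⊤ := lintegral_rk_lt_top hβκ
  refine ⟨A * (B + B), ENNReal.mul_lt_top hAt (ENNReal.add_lt_top.mpr ⟨hBt, hBt⟩), fun g hg => ?_⟩
  set w : R4 → ℝ≥0∞ := fun x => ENNReal.ofReal (‖x‖ ^ (-β)) with hw
  have hwm : Measurable w := measurable_rpow_norm _
  have hCS : ∀ x : R4, (∫⁻ z, rk (2 + κ) z * g (x + z)) ^ 2
      ≤ A * ∫⁻ z, rk (3 * κ) z * g (x + z) ^ 2 := by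
    intro x
    have hgx : Measurable fun z => g (x + z) := hg.comp (measurable_const_add x)
    have h := sq_lintegral_mul_le (volume : Measure R4) (f := rk ((4 - κ) / 2))
      (g := fun z => rk (3 * κ / 2) z * g (x + z)) (measurable_rk _).aemeasurable
      ((measurable_rk _).mul hgx).aemeasurable
    have hsq : ∀ (q : ℝ) (z : R4), rk (q / 2) z ^ 2 = rk q z := by
      intro q z
      unfold rk
      by_cases hz : z ∈ Metric.ball (0 : R4) 1
      · rw [Set.indicator_of_mem hz, Set.indicator_of_mem hz, ← ENNReal.ofReal_pow (by positivity),
          ← Real.rpow_natCast, ← Real.rpow_mul (norm_nonneg _)]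
        congr 2
        push_cast; ring
      · simp [Set.indicator_of_notMem hz]
    simp only [mul_pow, hsq] at h
    refine le_trans (pow_le_pow_left' (lintegral_mono fun z => ?_) 2) h
    rw [← mul_assoc]
    refine mul_le_mul_left ?_ _
    unfold rk
    by_cases hz : z ∈ Metric.ball (0 : R4) 1
    · rw [Set.indicator_of_mem hz, Set.indicator_of_mem hz, Set.indicator_of_mem hz,
        ← ENNReal.ofReal_mul (by positivity)]
      apply ENNReal.ofReal_le_ofReal
      rcases eq_or_ne z 0 with rfl | hz0
      · rw [norm_zero, Real.zero_rpow (by linarith : -(2 + κ) ≠ 0)]; positivity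
      · rw [← Real.rpow_add (norm_pos_iff.mpr hz0)]
        apply le_of_eq; congr 1; ring
    · simp [Set.indicator_of_notMem hz]
  have hshift : ∀ x : R4, ∫⁻ z, rk (3 * κ) z * g (x + z) ^ 2
      = ∫⁻ y, rk (3 * κ) (y - x) * g y ^ 2 := by
    intro x
    rw [← lintegral_add_left_eq_self (fun y => rk (3 * κ) (y - x) * g y ^ 2) x]
    simp
  have hinner : ∀ y : R4, ∫⁻ x, w x * rk (3 * κ) (y - x) ≤ B + B := by
    intro y
    have hne : ∀ᵐ x : R4, x ≠ 0 := by simp [ae_iff]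
    have hne' : ∀ᵐ x : R4, x ≠ y := by simp [ae_iff]
    calc ∫⁻ x, w x * rk (3 * κ) (y - x)
        ≤ ∫⁻ x, (rk (β + 3 * κ) x + rk (β + 3 * κ) (y - x)) := by
          refine lintegral_mono_ae ?_
          filter_upwards [hne, hne'] with x hx hxy
          exact weight_mul_rk_le hβ (by positivity) hx (sub_ne_zero.mpr hxy.symm)
      _ = B + B := by
          rw [lintegral_add_left (measurable_rk _),
            lintegral_sub_left_eq_self (fun z => rk (β + 3 * κ) z) y]
  have hm2 : Measurable fun p : R4 × R4 => w p.1 * (rk (3 * κ) (p.2 - p.1) * g p.2 ^ 2) :=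
    (hwm.comp measurable_fst).mul
      (((measurable_rk _).comp (measurable_snd.sub measurable_fst)).mul
        ((hg.comp measurable_snd).pow_const 2))
  calc ∫⁻ x : R4, w x * (∫⁻ z, rk (2 + κ) z * g (x + z)) ^ 2
      ≤ ∫⁻ x : R4, A * ∫⁻ y, w x * (rk (3 * κ) (y - x) * g y ^ 2) := by
        refine lintegral_mono fun x => ?_
        have hmx : Measurable fun y => rk (3 * κ) (y - x) * g y ^ 2 :=
          ((measurable_rk _).comp (measurable_id.sub_const x)).mul (hg.pow_const 2)
        rw [lintegral_const_mul _ hmx, ← hshift, ← mul_assoc, mul_comm A, mul_assoc]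
        exact mul_le_mul_right (hCS x) _
    _ = A * ∫⁻ y, ∫⁻ x, w x * (rk (3 * κ) (y - x) * g y ^ 2) := by
        rw [lintegral_const_mul' _ _ hAt.ne, lintegral_lintegral_swap hm2.aemeasurable]
    _ ≤ A * ∫⁻ y, (B + B) * g y ^ 2 := by
        gcongr with y
        have hmy : Measurable fun x => w x * rk (3 * κ) (y - x) :=
          hwm.mul ((measurable_rk _).comp (measurable_const.sub measurable_id))
        simp_rw [← mul_assoc]
        rw [lintegral_mul_const _ hmy]
        exact mul_le_mul_left (hinner y) _
    _ = A * (B + B) * ∫⁻ y, g y ^ 2 := by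
        rw [lintegral_const_mul _ (hg.pow_const 2), mul_assoc]

/-- A singular Adams inequality for small exponents, in scale-invariant form:
`∫ u² exp(c u²/ρ²) |x|^(-β) ≤ D ρ²` whenever `‖u‖_E = ρ`. -/
lemma exists_adams {β b₀ : ℝ} (hβ0 : 0 ≤ β) (hβ4 : β < 4) (hb₀ : 0 < b₀) :
    ∃ c D : ℝ, 0 < c ∧ 0 < D ∧ ∀ (a b u : R4 → ℝ) (ρ : ℝ), (∀ x, 0 ≤ a x) → (∀ x, b₀ ≤ b x) →
      ContDiff ℝ (⊤ : ℕ∞) u → 0 < ρ → enorm2 a b u = ENNReal.ofReal (ρ ^ 2) →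
      ∫⁻ x : R4, ENNReal.ofReal (‖x‖ ^ (-β)) *
        ENNReal.ofReal (u x ^ 2 * Real.exp (c * (u x ^ 2 / ρ ^ 2))) ≤ ENNReal.ofReal (D * ρ ^ 2) := by
  obtain ⟨C, hC, hpot⟩ := exists_potential_bound
  set κ := (4 - β) / 8 with hκ
  have hκ0 : 0 < κ := by rw [hκ]; linarith
  obtain ⟨N, hN, hL2⟩ := exists_weighted_L2_bound (β := β) (κ := κ) hβ0 hκ0 (by rw [hκ]; linarith)
  have hσ := sph_pos
  set M := 2 + 2 / b₀ with hM
  have hM0 : 0 < M := by positivity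
  refine ⟨2 * κ / (4 * C ^ 2 * sph * M), (2 * C) ^ 2 * (N.toReal + 1) * M, by positivity,
    by positivity, fun a b u ρ ha hb hu hρ hE => ?_⟩
  set g : R4 → ℝ≥0∞ := fun y => ENNReal.ofReal (|lapl u y| + |u y|) with hg
  have hgm : Measurable g := by
    have h1 := (continuous_lapl hu).abs
    have h2 := hu.continuous.abs
    exact (h1.add h2).measurable.ennreal_ofReal
  have hR : (Real.sqrt M * ρ) ^ 2 = M * ρ ^ 2 := by rw [mul_pow, Real.sq_sqrt hM0.le]
  have hgR : ∫⁻ y, g y ^ 2 ≤ ENNReal.ofReal ((Real.sqrt M * ρ) ^ 2) := by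
    rw [hR, ENNReal.ofReal_mul hM0.le, ← hE, enorm2, ← lintegral_const_mul' _ _ ENNReal.ofReal_ne_top]
    refine lintegral_mono fun y => ?_
    rw [hg, ← ENNReal.ofReal_pow (by positivity), ← ENNReal.ofReal_mul hM0.le]
    apply ENNReal.ofReal_le_ofReal
    have h1 : (|lapl u y| + |u y|) ^ 2 ≤ 2 * lapl u y ^ 2 + 2 * u y ^ 2 := by
      nlinarith [sq_nonneg (|lapl u y| - |u y|), sq_abs (lapl u y), sq_abs (u y)]
    have h2 : 0 ≤ a y * ‖gradient u y‖ ^ 2 := mul_nonneg (ha y) (by positivity)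
    have h3 : b₀ * u y ^ 2 ≤ b y * u y ^ 2 := mul_le_mul_of_nonneg_right (hb y) (by positivity)
    have h4 : 2 / b₀ * (b₀ * u y ^ 2) = 2 * u y ^ 2 := by field_simp
    have h5 : 2 / b₀ * (b₀ * u y ^ 2) ≤ 2 / b₀ * (b y * u y ^ 2) := by gcongr
    have h6 : 0 ≤ b y * u y ^ 2 := le_trans (by positivity) h3
    have h7 : 0 ≤ 2 / b₀ * (lapl u y ^ 2 + a y * ‖gradient u y‖ ^ 2) := by positivity
    rw [hM]
    nlinarith
  have hpt : ∀ x : R4, ENNReal.ofReal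
        (u x ^ 2 * Real.exp (2 * κ / (4 * C ^ 2 * sph * M) * (u x ^ 2 / ρ ^ 2)))
      ≤ ENNReal.ofReal ((2 * C) ^ 2) * (∫⁻ z, rk (2 + κ) z * g (x + z)) ^ 2 := by
    intro x
    have h := exp_mul_le_potential (s := u x) hC (by positivity : 0 < Real.sqrt M * ρ) hκ0 hgm hgR x
      (hpot u hu x)
    rw [hR] at h
    have h2 := pow_le_pow_left' h 2
    rw [mul_pow (ENNReal.ofReal (2 * C)), ← ENNReal.ofReal_pow (by positivity),
      ← ENNReal.ofReal_pow (by positivity), mul_pow |u x|, sq_abs, ← Real.exp_nat_mul] at h2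
    refine le_trans (le_of_eq ?_) h2
    congr 3
    push_cast
    field_simp
  calc ∫⁻ x : R4, ENNReal.ofReal (‖x‖ ^ (-β)) * ENNReal.ofReal
        (u x ^ 2 * Real.exp (2 * κ / (4 * C ^ 2 * sph * M) * (u x ^ 2 / ρ ^ 2)))
      ≤ ∫⁻ x : R4, ENNReal.ofReal ((2 * C) ^ 2) * (ENNReal.ofReal (‖x‖ ^ (-β)) *
          (∫⁻ z, rk (2 + κ) z * g (x + z)) ^ 2) := by
        refine lintegral_mono fun x => (mul_le_mul_right (hpt x) _).trans_eq ?_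
        ring
    _ ≤ ENNReal.ofReal ((2 * C) ^ 2) * (N * ENNReal.ofReal (M * ρ ^ 2)) := by
        rw [lintegral_const_mul' _ _ ENNReal.ofReal_ne_top]
        rw [hR] at hgR
        exact mul_le_mul_right ((hL2 g hgm).trans (mul_le_mul_right hgR _)) _
    _ ≤ ENNReal.ofReal ((2 * C) ^ 2) * (ENNReal.ofReal (N.toReal + 1) *
          ENNReal.ofReal (M * ρ ^ 2)) := by
        gcongr
        rw [ENNReal.le_ofReal_iff_toReal_le hN.ne (by positivity)]
        linarith
    _ = _ := by
        rw [← ENNReal.ofReal_mul (by positivity), ← ENNReal.ofReal_mul (by positivity)]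
        congr 1; ring

/-! ### The functional near the origin -/

lemma enorm2_const_smul {a b u : R4 → ℝ} (hu : ContDiff ℝ (⊤ : ℕ∞) u) (c : ℝ) :
    enorm2 a b (fun x => c * u x) = ENNReal.ofReal (c ^ 2) * enorm2 a b u := by
  have hl : ∀ x, lapl (fun x => c * u x) x = c * lapl u x := by
    intro x
    have h2 : ContDiffAt ℝ 2 u x :=
      (hu.of_le (by exact WithTop.coe_le_coe.mpr (le_top : (2 : ℕ∞) ≤ ⊤))).contDiffAt
    have h : iteratedFDeriv ℝ 2 (fun x => c * u x) x = c • iteratedFDeriv ℝ 2 u x := by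
      have := iteratedFDeriv_const_smul_apply (a := c) h2
      simpa [Pi.smul_def] using this
    simp only [lapl, h, smul_apply, smul_eq_mul, Finset.mul_sum]
  have hg : ∀ x, ‖gradient (fun x => c * u x) x‖ ^ 2 = c ^ 2 * ‖gradient u x‖ ^ 2 := by
    intro x
    have hd : DifferentiableAt ℝ u x := (hu.differentiable (by simp)) x
    have h : fderiv ℝ (fun x => c * u x) x = c • fderiv ℝ u x := fderiv_const_mul hd c
    simp only [gradient, h, LinearIsometryEquiv.norm_map, norm_smul, mul_pow, Real.norm_eq_abs,
      sq_abs]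
  rw [enorm2, enorm2, ← lintegral_const_mul' _ _ ENNReal.ofReal_ne_top]
  refine lintegral_congr fun x => ?_
  rw [← ENNReal.ofReal_mul (by positivity), hl, hg]
  congr 1; ring

/-- Homogeneity turns the bound on the unit sphere into `|∫ h u| ≤ |Ch| ‖u‖_E`. -/
lemma abs_integral_mul_le {a b h : R4 → ℝ} {Ch : ℝ}
    (hCh : ∀ φ : R4 → ℝ, ContDiff ℝ (⊤ : ℕ∞) φ → enorm2 a b φ = 1 →
      |∫ x : R4, h x * φ x| ≤ Ch) {u : R4 → ℝ} (hu : ContDiff ℝ (⊤ : ℕ∞) u) {ρ : ℝ} (hρ : 0 < ρ)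
    (hE : enorm2 a b u = ENNReal.ofReal (ρ ^ 2)) : |∫ x : R4, h x * u x| ≤ |Ch| * ρ := by
  have h1 := hCh (fun x => ρ⁻¹ * u x) (contDiff_const.mul hu) (by
    rw [enorm2_const_smul hu, hE, ← ENNReal.ofReal_mul (by positivity), ← mul_pow,
      inv_mul_cancel₀ hρ.ne']
    simp)
  have h2 : ∫ x : R4, h x * (ρ⁻¹ * u x) = ρ⁻¹ * ∫ x : R4, h x * u x := by
    rw [← integral_const_mul]
    exact integral_congr_ae (Eventually.of_forall fun x => by ring)
  rw [h2, abs_mul, abs_of_pos (inv_pos.mpr hρ), inv_mul_le_iff₀ hρ] at h1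
  nlinarith [le_abs_self Ch]

lemma integral_energy_eq {a b u : R4 → ℝ} (ha : Continuous a) (hb : Continuous b)
    (ha0 : ∀ x, 0 ≤ a x) (hb0 : ∀ x, 0 ≤ b x) (hu : ContDiff ℝ (⊤ : ℕ∞) u) {ρ : ℝ}
    (hE : enorm2 a b u = ENNReal.ofReal (ρ ^ 2)) :
    ∫ x : R4, ((lapl u x) ^ 2 + a x * ‖gradient u x‖ ^ 2 + b x * (u x) ^ 2) = ρ ^ 2 := by
  have cl := continuous_lapl hu
  have cu := hu.continuous
  have cg : Continuous (gradient u) :=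
    (InnerProductSpace.toDual ℝ R4).symm.continuous.comp (hu.continuous_fderiv (by simp))
  rw [integral_eq_lintegral_of_nonneg_ae]
  · rw [← enorm2, hE, ENNReal.toReal_ofReal (by positivity)]
  · refine Eventually.of_forall fun x => ?_
    have := ha0 x
    have := hb0 x
    simp only [Pi.zero_apply]
    positivity
  · exact Continuous.aestronglyMeasurable (by fun_prop)

/-- Since `λ_β > 0`, the weighted integral is finite (a divergent one would contribute the
quotient `0` to the infimum) and controlled by the energy. -/
lemma lintegral_weighted_sq_le {a b u : R4 → ℝ} {β : ℝ} (hlam : 0 < lambdaBeta a b β)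
    (hu : ContDiff ℝ (⊤ : ℕ∞) u) {ρ : ℝ} (hρ : 0 < ρ)
    (hE : enorm2 a b u = ENNReal.ofReal (ρ ^ 2)) :
    ∫⁻ x : R4, ENNReal.ofReal ((u x) ^ 2 / ‖x‖ ^ β)
      ≤ ENNReal.ofReal (ρ ^ 2 / lambdaBeta a b β) := by
  set I := ∫⁻ x : R4, ENNReal.ofReal ((u x) ^ 2 / ‖x‖ ^ β) with hI
  have hle : lambdaBeta a b β ≤ ρ ^ 2 / I.toReal := by
    refine csInf_le ⟨0, ?_⟩ ⟨u, hu, ?_, ?_, ?_⟩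
    · rintro r ⟨w, -, -, -, rfl⟩
      positivity
    · rw [hE]; exact ENNReal.ofReal_pos.mpr (by positivity)
    · rw [hE]; exact ENNReal.ofReal_lt_top
    · rw [hE, ENNReal.toReal_ofReal (by positivity)]
  have hIpos : 0 < I.toReal := by
    rcases (ENNReal.toReal_nonneg : 0 ≤ I.toReal).eq_or_lt with h | h
    · rw [← h] at hle
      exact absurd (hle.trans_eq (by simp)) (not_le.mpr hlam)
    · exact h
  have hIt : I ≠ ⊤ := by
    intro h; rw [h] at hIpos; simp at hIpos
  rw [ENNReal.le_ofReal_iff_toReal_le hIt (by positivity), le_div_iff₀ hlam, mul_comm]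
  exact (le_div_iff₀ hIpos).mp hle

lemma abs_Fprim_le {f : R4 → ℝ → ℝ} {b₁ b₂ γ α₀ : ℝ} (hb₁ : 0 < b₁) (hb₂ : 0 < b₂) (hγ : 1 ≤ γ)
    (hα₀ : 0 < α₀)
    (H1 : ∀ x : R4, ∀ s : ℝ, |f x s| ≤ b₁ * |s| + b₂ * |s| ^ γ * (Real.exp (α₀ * s ^ 2) - 1))
    (x : R4) (s : ℝ) :
    |Fprim f x s| ≤ (b₁ + b₂) * (s ^ 2 * Real.exp ((α₀ + (γ - 1)) * s ^ 2)) := by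
  have hp : |s| ^ γ ≤ |s| * Real.exp ((γ - 1) * s ^ 2) := by
    rcases eq_or_ne s 0 with rfl | hs
    · rw [abs_zero, Real.zero_rpow (by linarith)]; simp
    have hs' : 0 < |s| := abs_pos.mpr hs
    have h1 : |s| ≤ Real.exp (s ^ 2) := by
      have := Real.add_one_le_exp (s ^ 2)
      nlinarith [sq_abs s, sq_nonneg (|s| - 1)]
    calc |s| ^ γ = |s| ^ (1 + (γ - 1)) := by congr 1; ring
      _ = |s| * |s| ^ (γ - 1) := by rw [Real.rpow_add hs', Real.rpow_one]
      _ ≤ |s| * Real.exp (s ^ 2) ^ (γ - 1) := by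
          gcongr
      _ = |s| * Real.exp ((γ - 1) * s ^ 2) := by
          rw [← Real.exp_mul]; congr 2; ring
  have hbd : ∀ t ∈ Set.uIoc 0 s, ‖f x t‖
      ≤ (b₁ + b₂) * (|s| * Real.exp ((α₀ + (γ - 1)) * s ^ 2)) := by
    intro t ht
    have hts : |t| ≤ |s| := by
      have := Set.abs_sub_left_of_mem_uIcc (Set.uIoc_subset_uIcc ht)
      simpa using this
    have hts2 : t ^ 2 ≤ s ^ 2 := sq_le_sq.mpr hts
    have he : Real.exp (α₀ * t ^ 2) - 1 ≤ Real.exp (α₀ * s ^ 2) := by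
      have : Real.exp (α₀ * t ^ 2) ≤ Real.exp (α₀ * s ^ 2) := by gcongr
      linarith
    have he0 : 0 ≤ Real.exp (α₀ * t ^ 2) - 1 := by
      have := Real.one_le_exp (by positivity : 0 ≤ α₀ * t ^ 2)
      linarith
    have hone : 1 ≤ Real.exp ((α₀ + (γ - 1)) * s ^ 2) :=
      Real.one_le_exp (mul_nonneg (by linarith) (by positivity))
    calc ‖f x t‖ ≤ b₁ * |t| + b₂ * |t| ^ γ * (Real.exp (α₀ * t ^ 2) - 1) := H1 x t
      _ ≤ b₁ * |s| + b₂ * (|s| * Real.exp ((γ - 1) * s ^ 2)) * Real.exp (α₀ * s ^ 2) := by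
          have : |t| ^ γ ≤ |s| * Real.exp ((γ - 1) * s ^ 2) :=
            (Real.rpow_le_rpow (abs_nonneg t) hts (by linarith)).trans hp
          gcongr
      _ = b₁ * |s| + b₂ * (|s| * Real.exp ((α₀ + (γ - 1)) * s ^ 2)) := by
          rw [add_mul, Real.exp_add]; ring
      _ ≤ b₁ * (|s| * Real.exp ((α₀ + (γ - 1)) * s ^ 2))
            + b₂ * (|s| * Real.exp ((α₀ + (γ - 1)) * s ^ 2)) := by
          gcongr
          exact le_mul_of_one_le_right (abs_nonneg s) hone
      _ = _ := by ring
  have h := intervalIntegral.norm_integral_le_of_norm_le_const hbd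
  rw [sub_zero, Real.norm_eq_abs] at h
  refine h.trans_eq ?_
  rw [← sq_abs s]; ring

/-- Near the origin the nonlinear term eats strictly less than half of the energy. The part of `F`
beyond the quadratic one lives on `|u| > δ`, where it is at most
`e^(-Mδ²) · C u² e^((A+M)u²)`: a large `M` gives a small factor, and the singular Adams inequality
absorbs the exponential once `(A+M) ρ² ≤ c`. -/
lemma exists_nonlinear_bound {β α₀ : ℝ} (hβ0 : 0 ≤ β) (hβ4 : β < 4) (hα₀ : 0 < α₀)
    {a b : R4 → ℝ} {b₀ : ℝ} (hb₀ : 0 < b₀) (ha : ∀ x, 0 ≤ a x) (hb : ∀ x, b₀ ≤ b x)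
    {f : R4 → ℝ → ℝ}
    (H1 : ∃ b₁ b₂ γ : ℝ, 0 < b₁ ∧ 0 < b₂ ∧ 1 ≤ γ ∧ ∀ x : R4, ∀ s : ℝ,
      |f x s| ≤ b₁ * |s| + b₂ * |s| ^ γ * (Real.exp (α₀ * s ^ 2) - 1))
    (H4 : ∃ ℓ : ℝ, ℓ < lambdaBeta a b β ∧ ∃ δ : ℝ, 0 < δ ∧ ∀ x : R4, ∀ s : ℝ,
      s ≠ 0 → |s| ≤ δ → 2 * |Fprim f x s| / s ^ 2 ≤ ℓ) :
    ∃ r₀ κ : ℝ, 0 < r₀ ∧ 0 < κ ∧ ∀ (ρ : ℝ) (u : R4 → ℝ), 0 < ρ → ρ ≤ r₀ →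
      ContDiff ℝ (⊤ : ℕ∞) u → enorm2 a b u = ENNReal.ofReal (ρ ^ 2) →
      |∫ x : R4, Fprim f x (u x) / ‖x‖ ^ β| ≤ (1 / 2 - κ) * ρ ^ 2 := by
  obtain ⟨b₁, b₂, γ, hb₁, hb₂, hγ, hf⟩ := H1
  obtain ⟨ℓ, hℓ, δ, hδ, hF⟩ := H4
  obtain ⟨c, D, hc, hD, hAd⟩ := exists_adams hβ0 hβ4 hb₀
  set lam := lambdaBeta a b β with hlam
  have hℓ0 : 0 ≤ ℓ := le_trans (by positivity) (hF 0 δ hδ.ne' (abs_of_pos hδ).le)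
  have hlam0 : 0 < lam := hℓ0.trans_lt hℓ
  set A := α₀ + (γ - 1) with hA
  have hA0 : 0 < A := by rw [hA]; linarith
  set CF := b₁ + b₂ with hCF
  have hCF0 : 0 < CF := by positivity
  set κ := (1 - ℓ / lam) / 4 with hκ
  have hκ0 : 0 < κ := by
    have : ℓ / lam < 1 := (div_lt_one hlam0).mpr hℓ
    rw [hκ]; linarith
  set M := CF * D / (κ * δ ^ 2) with hM
  have hM0 : 0 < M := by positivity
  set K := CF * Real.exp (-(M * δ ^ 2)) with hK
  have hK0 : 0 < K := by positivity
  have hKD : K * D ≤ κ := by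
    have h1 : M * δ ^ 2 = CF * D / κ := by rw [hM]; field_simp
    have h2 : CF * D / κ ≤ Real.exp (CF * D / κ) := by
      have := Real.add_one_le_exp (CF * D / κ); linarith
    have h3 : CF * D ≤ κ * Real.exp (CF * D / κ) := by
      rw [mul_comm κ]; exact (div_le_iff₀ hκ0).mp h2
    rw [hK, h1, Real.exp_neg]
    calc CF * (Real.exp (CF * D / κ))⁻¹ * D = CF * D / Real.exp (CF * D / κ) := by
          field_simp
      _ ≤ κ := by rwa [div_le_iff₀ (Real.exp_pos _)]
  have hFall : ∀ (x : R4) (s : ℝ), |Fprim f x s|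
      ≤ ℓ / 2 * s ^ 2 + K * (s ^ 2 * Real.exp ((A + M) * s ^ 2)) := by
    intro x s
    rcases eq_or_ne s 0 with rfl | hs
    · simp [Fprim]
    rcases le_or_gt |s| δ with hsδ | hsδ
    · have h := hF x s hs hsδ
      rw [div_le_iff₀ (by positivity)] at h
      have : 0 ≤ K * (s ^ 2 * Real.exp ((A + M) * s ^ 2)) := by positivity
      linarith
    · have h := abs_Fprim_le hb₁ hb₂ hγ hα₀ hf x s
      have hδs : δ ^ 2 ≤ s ^ 2 := by
        rw [← sq_abs s]; exact pow_le_pow_left₀ hδ.le hsδ.le 2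
      have hexp : Real.exp (A * s ^ 2)
          ≤ Real.exp (-(M * δ ^ 2)) * Real.exp ((A + M) * s ^ 2) := by
        rw [← Real.exp_add]
        apply Real.exp_le_exp.mpr
        nlinarith
      calc |Fprim f x s| ≤ CF * (s ^ 2 * Real.exp (A * s ^ 2)) := h
        _ ≤ CF * (s ^ 2 * (Real.exp (-(M * δ ^ 2)) * Real.exp ((A + M) * s ^ 2))) := by gcongr
        _ = K * (s ^ 2 * Real.exp ((A + M) * s ^ 2)) := by rw [hK]; ring
        _ ≤ _ := le_add_of_nonneg_left (by positivity)
  refine ⟨Real.sqrt (c / (A + M)), κ, Real.sqrt_pos.mpr (by positivity), hκ0,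
    fun ρ u hρ hρr hu hE => ?_⟩
  have hρ2 : (A + M) * ρ ^ 2 ≤ c := by
    have h := pow_le_pow_left₀ hρ.le hρr 2
    rw [Real.sq_sqrt (by positivity), le_div_iff₀ (by positivity)] at h
    linarith
  have hexp : ∀ s : ℝ, (A + M) * s ^ 2 ≤ c * (s ^ 2 / ρ ^ 2) := by
    intro s
    have : A + M ≤ c / ρ ^ 2 := (le_div_iff₀ (by positivity)).mpr hρ2
    calc (A + M) * s ^ 2 ≤ c / ρ ^ 2 * s ^ 2 := by gcongr
      _ = _ := by ring
  have hI1 := lintegral_weighted_sq_le hlam0 hu hρ hE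
  have hI2 := hAd a b u ρ ha hb hu hρ hE
  have htot : ∫⁻ x : R4, ENNReal.ofReal ‖Fprim f x (u x) / ‖x‖ ^ β‖
      ≤ ENNReal.ofReal ((1 / 2 - κ) * ρ ^ 2) := by
    have cu := hu.continuous
    have hm1 : Measurable fun x : R4 => ENNReal.ofReal ((u x) ^ 2 / ‖x‖ ^ β) :=
      ((cu.measurable.pow_const 2).div (measurable_norm.pow_const β)).ennreal_ofReal
    calc ∫⁻ x : R4, ENNReal.ofReal ‖Fprim f x (u x) / ‖x‖ ^ β‖
        ≤ ∫⁻ x : R4, (ENNReal.ofReal (ℓ / 2) * ENNReal.ofReal ((u x) ^ 2 / ‖x‖ ^ β)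
            + ENNReal.ofReal K * (ENNReal.ofReal (‖x‖ ^ (-β)) *
              ENNReal.ofReal (u x ^ 2 * Real.exp (c * (u x ^ 2 / ρ ^ 2))))) := by
          refine lintegral_mono fun x => ?_
          rw [← ENNReal.ofReal_mul (by positivity), ← ENNReal.ofReal_mul (by positivity),
            ← ENNReal.ofReal_mul (by positivity), ← ENNReal.ofReal_add (by positivity)
            (by positivity)]
          apply ENNReal.ofReal_le_ofReal
          have hw : 0 ≤ (‖x‖ ^ β)⁻¹ := by positivity
          rw [norm_div, Real.norm_eq_abs, Real.norm_of_nonneg (by positivity : 0 ≤ ‖x‖ ^ β),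
            Real.rpow_neg (norm_nonneg x), div_eq_mul_inv]
          calc |Fprim f x (u x)| * (‖x‖ ^ β)⁻¹
              ≤ (ℓ / 2 * u x ^ 2 + K * (u x ^ 2 * Real.exp (c * (u x ^ 2 / ρ ^ 2))))
                  * (‖x‖ ^ β)⁻¹ := by
                refine mul_le_mul_of_nonneg_right ((hFall x (u x)).trans ?_) hw
                have he := Real.exp_le_exp.mpr (hexp (u x))
                exact add_le_add le_rfl (mul_le_mul_of_nonneg_left
                  (mul_le_mul_of_nonneg_left he (by positivity)) hK0.le)
            _ = _ := by ring
      _ ≤ ENNReal.ofReal (ℓ / 2) * ENNReal.ofReal (ρ ^ 2 / lam)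
            + ENNReal.ofReal K * ENNReal.ofReal (D * ρ ^ 2) := by
          rw [lintegral_add_left (hm1.const_mul _), lintegral_const_mul' _ _ ENNReal.ofReal_ne_top,
            lintegral_const_mul' _ _ ENNReal.ofReal_ne_top]
          gcongr
      _ ≤ _ := by
          rw [← ENNReal.ofReal_mul (by positivity), ← ENNReal.ofReal_mul (by positivity),
            ← ENNReal.ofReal_add (by positivity) (by positivity)]
          apply ENNReal.ofReal_le_ofReal
          have h1 : ℓ / 2 * (ρ ^ 2 / lam) = (1 / 2 - 2 * κ) * ρ ^ 2 := by
            rw [hκ]; ring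
          have h2 : K * (D * ρ ^ 2) ≤ κ * ρ ^ 2 := by
            rw [← mul_assoc]; gcongr
          rw [h1]; linarith
  have hhalf : 0 ≤ 1 / 2 - κ := by
    have : 0 ≤ ℓ / lam := by positivity
    rw [hκ]; linarith
  -- no integrability is needed: a divergent Bochner integral is `0`
  rw [← Real.norm_eq_abs]
  refine (norm_integral_le_lintegral_norm _).trans ?_
  exact ENNReal.toReal_le_of_le_ofReal (by positivity) htot

/-- Lemma 3.2 (mountain-pass geometry near the origin): under `(A₁)`, `(H₁)` and `(H₄)`,
(i) for small `ε > 0` there are radii `r_ε > 0` (with `r_ε → 0` as `ε → 0`) and levels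
`θ_ε > 0` such that `J_ε(u) ≥ θ_ε` whenever `‖u‖_E = r_ε`; (ii) for `ε = 0` there is
`r₀ > 0` so that for every `0 < r ≤ r₀` some `θ > 0` satisfies `J₀(u) ≥ θ` whenever
`‖u‖_E = r`. -/
theorem stmt_13 (β α₀ : ℝ) (hβ0 : 0 ≤ β) (hβ4 : β < 4) (hα₀ : 0 < α₀)
    (a b : R4 → ℝ) (ha : Continuous a) (hb : Continuous b)
    (a₀ b₀ : ℝ) (ha₀ : 0 < a₀) (hb₀ : 0 < b₀)
    (haa : ∀ x, a₀ ≤ a x) (hbb : ∀ x, b₀ ≤ b x)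
    (h : R4 → ℝ) (hhm : Measurable h)
    (Ch : ℝ) (hCh : ∀ φ : R4 → ℝ, ContDiff ℝ (⊤ : ℕ∞) φ → enorm2 a b φ = 1 →
      |∫ x : R4, h x * φ x| ≤ Ch)
    (f : R4 → ℝ → ℝ) (hf : Continuous (Function.uncurry f))
    (H1 : ∃ b₁ b₂ γ : ℝ, 0 < b₁ ∧ 0 < b₂ ∧ 1 ≤ γ ∧ ∀ x : R4, ∀ s : ℝ,
      |f x s| ≤ b₁ * |s| + b₂ * |s| ^ γ * (Real.exp (α₀ * s ^ 2) - 1))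
    (H4 : ∃ ℓ : ℝ, ℓ < lambdaBeta a b β ∧ ∃ δ : ℝ, 0 < δ ∧ ∀ x : R4, ∀ s : ℝ,
      s ≠ 0 → |s| ≤ δ → 2 * |Fprim f x s| / s ^ 2 ≤ ℓ) :
    (∃ ε₁ : ℝ, 0 < ε₁ ∧ ∃ r θ : ℝ → ℝ,
      (∀ ε : ℝ, 0 < ε → ε < ε₁ → 0 < r ε ∧ 0 < θ ε ∧
        ∀ u : R4 → ℝ, ContDiff ℝ (⊤ : ℕ∞) u →
          enorm2 a b u = ENNReal.ofReal ((r ε) ^ 2) → θ ε ≤ Jfun a b β f ε h u) ∧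
      Tendsto r (nhdsWithin 0 (Set.Ioi (0 : ℝ))) (nhds 0)) ∧
    (∃ r₀ : ℝ, 0 < r₀ ∧ ∀ ρ : ℝ, 0 < ρ → ρ ≤ r₀ → ∃ θ : ℝ, 0 < θ ∧
      ∀ u : R4 → ℝ, ContDiff ℝ (⊤ : ℕ∞) u →
        enorm2 a b u = ENNReal.ofReal (ρ ^ 2) → θ ≤ Jfun a b β f 0 h u) := by
  have ha0 : ∀ x, 0 ≤ a x := fun x => ha₀.le.trans (haa x)
  have hb0 : ∀ x, 0 ≤ b x := fun x => hb₀.le.trans (hbb x)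
  obtain ⟨r₀, κ, hr₀, hκ, hN⟩ := exists_nonlinear_bound hβ0 hβ4 hα₀ hb₀ ha0 hbb H1 H4
  have hJ : ∀ (ε ρ : ℝ) (u : R4 → ℝ), 0 ≤ ε → 0 < ρ → ρ ≤ r₀ → ContDiff ℝ (⊤ : ℕ∞) u →
      enorm2 a b u = ENNReal.ofReal (ρ ^ 2) →
      κ * ρ ^ 2 - ε * (|Ch| * ρ) ≤ Jfun a b β f ε h u := by
    intro ε ρ u hε hρ hρr hu hE
    have h1 := hN ρ u hρ hρr hu hE
    have h2 := abs_integral_mul_le hCh hu hρ hE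
    have h3 : ε * (∫ x : R4, h x * u x) ≤ ε * (|Ch| * ρ) :=
      mul_le_mul_of_nonneg_left ((le_abs_self _).trans h2) hε
    have h4 := (le_abs_self _).trans h1
    rw [Jfun, integral_energy_eq ha hb ha0 hb0 hu hE]
    linarith
  refine ⟨⟨min (r₀ ^ 2) ((κ / (2 * (|Ch| + 1))) ^ 2), by positivity, Real.sqrt,
    fun ε => κ * ε / 2, ?_, ?_⟩, r₀, hr₀, ?_⟩
  · intro ε hε hε1
    refine ⟨Real.sqrt_pos.mpr hε, by positivity, fun u hu hE => ?_⟩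
    have hs : Real.sqrt ε ≤ r₀ :=
      (Real.sqrt_le_left hr₀.le).mpr (hε1.le.trans (min_le_left _ _))
    have hs2 : Real.sqrt ε ≤ κ / (2 * (|Ch| + 1)) :=
      (Real.sqrt_le_left (by positivity)).mpr (hε1.le.trans (min_le_right _ _))
    have h := hJ ε (Real.sqrt ε) u hε.le (Real.sqrt_pos.mpr hε) hs hu hE
    rw [Real.sq_sqrt hε.le] at h
    have h5 : |Ch| * Real.sqrt ε ≤ κ / 2 := by
      rw [le_div_iff₀ (by positivity)] at hs2
      nlinarith [Real.sqrt_nonneg ε]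
    have h6 : ε * (|Ch| * Real.sqrt ε) ≤ ε * (κ / 2) := mul_le_mul_of_nonneg_left h5 hε.le
    linarith
  · have := Real.continuous_sqrt.tendsto 0
    rw [Real.sqrt_zero] at this
    exact this.mono_left nhdsWithin_le_nhds
  · intro ρ hρ hρr
    refine ⟨κ * ρ ^ 2, by positivity, fun u hu hE => ?_⟩
    have := hJ 0 ρ u le_rfl hρ hρr hu hE
    simpa using this
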